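/- Let K ⊂ ℝ³ be compact and δ > 0 be such that for every point (r₀, z) ∈ K one has η(q) = 1 for all q ∈ ℝ² with |q − r₀| ≤ 2δ. Then for every c₀ > 0 and every n ∈ ℕ there is a constant C = C(n, c₀, K, η) such that the z-derivative of p_k satisfies |∂p_k/∂z (r) + 2π sin(kz)| ≤ C (Re k)^{−n} for all r = (r₀, z) ∈ K and all k ∈ ℂ with Re k ≥ 1 and |Im k| ≤ c₀. -/

import Mathlib

open MeasureTheory Real Classical
open scoped RealInnerProductSpace

noncomputable section

abbrev E2 := EuclideanSpace ℝ (Fin 2)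
abbrev E3 := EuclideanSpace ℝ (Fin 3)

/-- The kernel `S_k(v) = sin(k|v|)/|v|`, with the removable singularity at `0` filled
in by the value `k`. -/
def Skern (k : ℂ) (v : E3) : ℂ :=
  if v = 0 then k else Complex.sin (k * ‖v‖) / (‖v‖ : ℂ)

/-- The embedding `q ↦ (q, 0)` of `ℝ²` into `ℝ³`. -/
def emb2 (q : E2) : E3 := (WithLp.equiv 2 (Fin 3 → ℝ)).symm ![q 0, q 1, 0]

/-- `p_k(r) = ∫_{ℝ²} η(q) S_k(r - (q,0)) dq`. -/
def pfun (η : E2 → ℝ) (k : ℂ) (r : E3) : ℂ :=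
  ∫ q : E2, (η q : ℂ) * Skern k (r - emb2 q)

/-- The projection of an `ℝ³` point onto its first two coordinates. -/
def proj32 (r : E3) : E2 := (WithLp.equiv 2 (Fin 2 → ℝ)).symm ![r 0, r 1]

/-- The partial derivative `∂p_k/∂z`, i.e. the derivative of `p_k` in the direction of the
third coordinate vector. -/
def pz (η : E2 → ℝ) (k : ℂ) (r : E3) : ℂ :=
  fderiv ℝ (pfun η k) r (EuclideanSpace.single 2 (1 : ℝ))

/-!
Write `R = √(ρ² + z²)` for the distance from `r = (r₀, z)` to the point of the plane with polar
coordinates `(ρ, θ)` around `r₀`. Since `ρ ∂S_k/∂z = z ∂ρ (sin (k R) / R)`, integrating by parts in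
`ρ` along each ray turns `∂p_k/∂z` into the boundary terms at `ρ = 0`, which add up to
`-2π η(r₀) sin (k z)`, minus the integral over `θ` and `ρ` of `z ∂ρη · sin (k R) / R`. As `η` is
constant near `r₀`, that integral lives where `ρ` is bounded away from `0`; there the phase `R` has
no stationary point, `∂ρR = ρ / R ≠ 0`, and the amplitude vanishes near both ends, so `n` more
integrations by parts gain a factor `k⁻ⁿ`, while `|Im k| ≤ c₀` keeps `exp (± i k R)` bounded.
-/

open Set Filter Topology Complex
open scoped ContDiff

section NonstationaryPhase

variable {P F : Type*} [NormedAddCommGroup F] [NormedSpace ℝ F]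

/-- The partial derivative in the last variable of a function of a parameter and a real variable.
It is a `deriv` along slices rather than an `fderiv`, so that it depends only on the slice. -/
def partialSnd (g : P × ℝ → F) (x : P × ℝ) : F := deriv (fun t => g (x.1, t)) x.2

/-- The transpose `f ↦ ∂ₜ (f / ∂ₜφ)`, up to sign, of the operator `g ↦ ∂ₜg / ∂ₜφ`, which multiplies
`exp (i k φ)` by `i k`. -/
def phaseTranspose (φ : P × ℝ → ℝ) (f : P × ℝ → ℂ) : P × ℝ → ℂ :=
  partialSnd fun x => f x / partialSnd φ x

lemma phaseTranspose_eventuallyEq_zero {φ : P × ℝ → ℝ} {f : P × ℝ → ℂ} {p : P} {t : ℝ}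
    (h : (fun s => f (p, s)) =ᶠ[𝓝 t] 0) : (fun s => phaseTranspose φ f (p, s)) =ᶠ[𝓝 t] 0 := by
  have hdiv : (fun s => f (p, s) / partialSnd φ (p, s)) =ᶠ[𝓝 t] fun _ => 0 := by
    filter_upwards [h] with s hs
    simp [hs]
  filter_upwards [hdiv.deriv] with s hs
  exact hs.trans (deriv_const s 0)

lemma norm_cexp_I_mul_le {k : ℂ} {c x N : ℝ} (hk : |k.im| ≤ c) (hx : |x| ≤ N) :
    ‖cexp (I * k * x)‖ ≤ Real.exp (c * N) := by
  rw [norm_exp]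
  gcongr
  calc (I * k * x).re ≤ |(I * k * x).re| := le_abs_self _
    _ = |k.im| * |x| := by simp [abs_mul]
    _ ≤ c * N := by gcongr; exact (abs_nonneg _).trans hk

lemma exists_norm_integral_mul_cexp_le [TopologicalSpace P] {A : Set P} (hA : IsCompact A) {a b : ℝ}
    {φ : P × ℝ → ℝ} {f : P × ℝ → ℂ} (hφ : ContinuousOn φ (A ×ˢ uIcc a b))
    (hf : ContinuousOn f (A ×ˢ uIcc a b)) (c : ℝ) :
    ∃ C, ∀ p ∈ A, ∀ k : ℂ, |k.im| ≤ c →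
      ‖∫ t in a..b, f (p, t) * cexp (I * k * φ (p, t))‖ ≤ C := by
  have hcompact : IsCompact (A ×ˢ uIcc a b) := hA.prod isCompact_uIcc
  obtain ⟨M, hM⟩ := hcompact.exists_bound_of_continuousOn hf
  obtain ⟨N, hN⟩ := hcompact.exists_bound_of_continuousOn hφ
  refine ⟨M * Real.exp (c * N) * |b - a|, fun p hp k hk => ?_⟩
  refine intervalIntegral.norm_integral_le_of_norm_le_const fun t ht => ?_
  have hx : (p, t) ∈ A ×ˢ uIcc a b := ⟨hp, uIoc_subset_uIcc ht⟩
  rw [norm_mul]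
  exact mul_le_mul (hM _ hx) (norm_cexp_I_mul_le hk (hN _ hx)) (norm_nonneg _)
    ((norm_nonneg _).trans (hM _ hx))

lemma I_mul_integral_mul_cexp {a b : ℝ} {φ φ' : ℝ → ℝ} {f u' : ℝ → ℂ}
    (hφ : ∀ t ∈ uIcc a b, HasDerivAt φ (φ' t) t) (hφ' : ContinuousOn φ' (uIcc a b))
    (hφ0 : ∀ t ∈ uIcc a b, φ' t ≠ 0)
    (hu : ∀ t ∈ uIcc a b, HasDerivAt (fun s => f s / φ' s) (u' t) t)
    (hu' : ContinuousOn u' (uIcc a b)) (ha : f a = 0) (hb : f b = 0) (k : ℂ) :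
    I * k * ∫ t in a..b, f t * cexp (I * k * φ t) = -∫ t in a..b, u' t * cexp (I * k * φ t) := by
  have hφc : ContinuousOn φ (uIcc a b) := HasDerivAt.continuousOn hφ
  have hexp : ∀ t ∈ uIcc a b,
      HasDerivAt (fun s => cexp (I * k * φ s)) (cexp (I * k * φ t) * (I * k * φ' t)) t :=
    fun t ht => ((hφ t ht).ofReal_comp.const_mul (I * k)).cexp
  have hparts := intervalIntegral.integral_mul_deriv_eq_deriv_mul hu hexp
    hu'.intervalIntegrable (ContinuousOn.intervalIntegrable (by fun_prop))
  calc I * k * ∫ t in a..b, f t * cexp (I * k * φ t)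
      = ∫ t in a..b, f t / φ' t * (cexp (I * k * φ t) * (I * k * φ' t)) := by
        rw [← intervalIntegral.integral_const_mul]
        refine intervalIntegral.integral_congr fun t ht => ?_
        have hne : (φ' t : ℂ) ≠ 0 := ofReal_ne_zero.2 (hφ0 t ht)
        field_simp
    _ = -∫ t in a..b, u' t * cexp (I * k * φ t) := by simp [hparts, ha, hb]

lemma integral_mul_sin_eq {a b : ℝ} {φ : ℝ → ℝ} {f : ℝ → ℂ} (hφ : ContinuousOn φ (uIcc a b))
    (hf : ContinuousOn f (uIcc a b)) (k : ℂ) :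
    ∫ t in a..b, f t * Complex.sin (k * φ t) =
      I / 2 * ((∫ t in a..b, f t * cexp (I * (-k) * φ t)) -
        ∫ t in a..b, f t * cexp (I * k * φ t)) := by
  have hint (k : ℂ) : IntervalIntegrable (fun t => f t * cexp (I * k * φ t)) volume a b :=
    ContinuousOn.intervalIntegrable (by fun_prop)
  rw [← intervalIntegral.integral_sub (hint _) (hint _), ← intervalIntegral.integral_const_mul]
  refine intervalIntegral.integral_congr fun t _ => ?_
  simp only [Complex.sin]
  ring_nf

variable [NormedAddCommGroup P] [NormedSpace ℝ P] {U : Set (P × ℝ)}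

lemma hasDerivAt_partialSnd {g : P × ℝ → F} {p : P} {t : ℝ}
    (hg : DifferentiableAt ℝ g (p, t)) :
    HasDerivAt (fun s => g (p, s)) (partialSnd g (p, t)) t := by
  have hslice : DifferentiableAt ℝ (fun s => (p, s)) t := by fun_prop
  exact (hg.comp t hslice).hasDerivAt

lemma partialSnd_eq_fderiv {g : P × ℝ → F} {x : P × ℝ} (hg : DifferentiableAt ℝ g x) :
    partialSnd g x = fderiv ℝ g x (0, 1) :=
  (hg.hasFDerivAt.comp_hasDerivAt x.2
    ((hasDerivAt_const x.2 x.1).prodMk (hasDerivAt_id x.2))).deriv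

lemma contDiffOn_partialSnd (hU : IsOpen U) {g : P × ℝ → F} (hg : ContDiffOn ℝ ∞ g U) :
    ContDiffOn ℝ ∞ (partialSnd g) U :=
  ((hg.fderiv_of_isOpen hU le_rfl).clm_apply contDiffOn_const).congr fun _ hx =>
    partialSnd_eq_fderiv ((hg.contDiffAt (hU.mem_nhds hx)).differentiableAt (by simp))

lemma contDiffOn_div_partialSnd (hU : IsOpen U) {φ : P × ℝ → ℝ} (hφ : ContDiffOn ℝ ∞ φ U)
    (hφ0 : ∀ x ∈ U, partialSnd φ x ≠ 0) {f : P × ℝ → ℂ} (hf : ContDiffOn ℝ ∞ f U) :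
    ContDiffOn ℝ ∞ (fun x => f x / partialSnd φ x) U := by
  simp only [div_eq_mul_inv, ← ofReal_inv]
  exact hf.mul (ofRealCLM.contDiff.comp_contDiffOn ((contDiffOn_partialSnd hU hφ).inv hφ0))

theorem exists_norm_pow_mul_norm_integral_mul_cexp_le (hU : IsOpen U) {φ : P × ℝ → ℝ}
    (hφ : ContDiffOn ℝ ∞ φ U) (hφ0 : ∀ x ∈ U, partialSnd φ x ≠ 0) {A : Set P} (hA : IsCompact A)
    {a b : ℝ} (hAU : A ×ˢ uIcc a b ⊆ U) (c : ℝ) (n : ℕ) {f : P × ℝ → ℂ}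
    (hf : ContDiffOn ℝ ∞ f U) :
    ∃ C, ∀ p ∈ A, (fun t => f (p, t)) =ᶠ[𝓝 a] 0 → (fun t => f (p, t)) =ᶠ[𝓝 b] 0 →
      ∀ k : ℂ, |k.im| ≤ c →
        ‖k‖ ^ n * ‖∫ t in a..b, f (p, t) * cexp (I * k * φ (p, t))‖ ≤ C := by
  induction n generalizing f with
  | zero =>
    obtain ⟨C, hC⟩ := exists_norm_integral_mul_cexp_le hA (hφ.continuousOn.mono hAU)
      (hf.continuousOn.mono hAU) c
    exact ⟨C, fun p hp _ _ k hk => by simpa using hC p hp k hk⟩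
  | succ n ih =>
    have hu := contDiffOn_div_partialSnd hU hφ hφ0 hf
    have hu' : ContDiffOn ℝ ∞ (phaseTranspose φ f) U := contDiffOn_partialSnd hU hu
    obtain ⟨C, hC⟩ := ih hu'
    refine ⟨C, fun p hp ha hb k hk => ?_⟩
    have hmem : ∀ t ∈ uIcc a b, (p, t) ∈ U := fun t ht => hAU ⟨hp, ht⟩
    have hslice : ContinuousOn (fun t : ℝ => (p, t)) (uIcc a b) := by fun_prop
    have hdiff {G : Type _} [NormedAddCommGroup G] [NormedSpace ℝ G] {g : P × ℝ → G}
        (hg : ContDiffOn ℝ ∞ g U) (t : ℝ) (ht : t ∈ uIcc a b) :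
        HasDerivAt (fun s => g (p, s)) (partialSnd g (p, t)) t :=
      hasDerivAt_partialSnd <|
        (hg.contDiffAt (hU.mem_nhds (hmem t ht))).differentiableAt (by simp)
    have hparts := I_mul_integral_mul_cexp (hdiff hφ)
      ((contDiffOn_partialSnd hU hφ).continuousOn.comp hslice hmem)
      (fun t ht => hφ0 _ (hmem t ht)) (hdiff hu) (hu'.continuousOn.comp hslice hmem)
      ha.eq_of_nhds hb.eq_of_nhds k
    calc ‖k‖ ^ (n + 1) * ‖∫ t in a..b, f (p, t) * cexp (I * k * φ (p, t))‖
        = ‖k‖ ^ n * ‖I * k * ∫ t in a..b, f (p, t) * cexp (I * k * φ (p, t))‖ := by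
          simp [pow_succ, mul_assoc]
      _ = ‖k‖ ^ n * ‖∫ t in a..b, phaseTranspose φ f (p, t) * cexp (I * k * φ (p, t))‖ := by
          rw [hparts, norm_neg]; rfl
      _ ≤ C := hC p hp (phaseTranspose_eventuallyEq_zero ha)
          (phaseTranspose_eventuallyEq_zero hb) k hk

theorem exists_norm_pow_mul_norm_integral_mul_sin_le (hU : IsOpen U) {φ : P × ℝ → ℝ}
    (hφ : ContDiffOn ℝ ∞ φ U) (hφ0 : ∀ x ∈ U, partialSnd φ x ≠ 0) {A : Set P} (hA : IsCompact A)
    {a b : ℝ} (hAU : A ×ˢ uIcc a b ⊆ U) (c : ℝ) (n : ℕ) {f : P × ℝ → ℂ}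
    (hf : ContDiffOn ℝ ∞ f U) :
    ∃ C, ∀ p ∈ A, (fun t => f (p, t)) =ᶠ[𝓝 a] 0 → (fun t => f (p, t)) =ᶠ[𝓝 b] 0 →
      ∀ k : ℂ, |k.im| ≤ c →
        ‖k‖ ^ n * ‖∫ t in a..b, f (p, t) * Complex.sin (k * φ (p, t))‖ ≤ C := by
  obtain ⟨C, hC⟩ := exists_norm_pow_mul_norm_integral_mul_cexp_le hU hφ hφ0 hA hAU c n hf
  refine ⟨C, fun p hp ha hb k hk => ?_⟩
  have hslice : ContinuousOn (fun t : ℝ => (p, t)) (uIcc a b) := by fun_prop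
  have hmem : ∀ t ∈ uIcc a b, (p, t) ∈ U := fun t ht => hAU ⟨hp, ht⟩
  have hpos := hC p hp ha hb k hk
  have hneg := hC p hp ha hb (-k) (by simpa using hk)
  rw [norm_neg] at hneg
  rw [integral_mul_sin_eq (φ := fun t => φ (p, t)) (f := fun t => f (p, t))
    (hφ.continuousOn.comp hslice hmem) (hf.continuousOn.comp hslice hmem), norm_mul,
    show ‖I / 2‖ = (1 / 2 : ℝ) by simp]
  calc ‖k‖ ^ n * (1 / 2 * ‖(∫ t in a..b, f (p, t) * cexp (I * (-k) * φ (p, t))) -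
        ∫ t in a..b, f (p, t) * cexp (I * k * φ (p, t))‖)
      ≤ ‖k‖ ^ n * (1 / 2 * (‖∫ t in a..b, f (p, t) * cexp (I * (-k) * φ (p, t))‖ +
        ‖∫ t in a..b, f (p, t) * cexp (I * k * φ (p, t))‖)) := by
        gcongr
        exact norm_sub_le _ _
    _ ≤ C := by linarith

end NonstationaryPhase

section RadialKernel

/-- The entire function `w ↦ sin √w / √w`, given by its power series: `S_k (v)` is a smooth
function of `v` because it is a smooth function of `‖v‖²`. -/
def sincSqrt (w : ℂ) : ℂ := ∑' n : ℕ, (-1) ^ n * w ^ n / (2 * n + 1).factorial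

lemma norm_sincSqrt_term_le {w : ℂ} {M : ℝ} (hw : ‖w‖ ≤ M) (n : ℕ) :
    ‖(-1) ^ n * w ^ n / ((2 * n + 1).factorial : ℂ)‖ ≤ M ^ n / n.factorial := by
  have hfact : (n.factorial : ℝ) ≤ (2 * n + 1).factorial :=
    mod_cast Nat.factorial_le (by lia)
  have hM : 0 ≤ M := (norm_nonneg w).trans hw
  simp only [norm_div, norm_mul, norm_pow, norm_neg, norm_one, one_pow, one_mul,
    Complex.norm_natCast]
  gcongr

lemma differentiable_sincSqrt : Differentiable ℂ sincSqrt := by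
  intro w
  have hon : DifferentiableOn ℂ sincSqrt (Metric.ball 0 (‖w‖ + 1)) :=
    differentiableOn_tsum_of_summable_norm (Real.summable_pow_div_factorial (‖w‖ + 1))
      (fun n => by fun_prop) Metric.isOpen_ball
      fun n v hv => norm_sincSqrt_term_le (mem_ball_zero_iff.1 hv).le n
  exact hon.differentiableAt (Metric.isOpen_ball.mem_nhds (by simp))

lemma mul_sincSqrt_sq (w : ℂ) : w * sincSqrt (w ^ 2) = Complex.sin w := by
  rw [Complex.sin_eq_tsum, sincSqrt, ← tsum_mul_left]
  congr with n
  ring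

lemma sincSqrt_zero : sincSqrt 0 = 1 := by
  rw [sincSqrt, tsum_eq_single 0 fun n hn => by simp [hn]]
  simp

/-- `S_k (v)` as a function of `t = ‖v‖²`. -/
def sinKernel (k : ℂ) (t : ℝ) : ℂ := k * sincSqrt (k ^ 2 * t)

lemma contDiff_sinKernel {n : WithTop ℕ∞} (k : ℂ) : ContDiff ℝ n (sinKernel k) :=
  contDiff_const.mul <| (differentiable_sincSqrt.contDiff.restrict_scalars ℝ).comp <|
    contDiff_const.mul ofRealCLM.contDiff

lemma mul_sinKernel_sq (k : ℂ) (x : ℝ) : x * sinKernel k (x ^ 2) = Complex.sin (k * x) := by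
  rw [← mul_sincSqrt_sq, sinKernel]
  push_cast
  ring_nf

lemma Skern_eq_sinKernel (k : ℂ) (v : E3) : Skern k v = sinKernel k (‖v‖ ^ 2) := by
  by_cases hv : v = 0
  · simp [Skern, sinKernel, hv, sincSqrt_zero]
  · rw [Skern, if_neg hv, ← mul_sinKernel_sq]
    exact mul_div_cancel_left₀ _ (by simpa using hv)

variable {E : Type*} [NormedAddCommGroup E] [InnerProductSpace ℝ E]

lemma fderiv_comp_norm_sq_apply {g : ℝ → ℂ} {v : E} (hg : DifferentiableAt ℝ g (‖v‖ ^ 2)) (w : E) :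
    fderiv ℝ (fun u : E => g (‖u‖ ^ 2)) v w = ⟪v, w⟫ * (2 * deriv g (‖v‖ ^ 2)) := by
  have h := hg.hasFDerivAt.comp v (hasStrictFDerivAt_norm_sq v).hasFDerivAt
  rw [show (fun u : E => g (‖u‖ ^ 2)) = g ∘ fun u => ‖u‖ ^ 2 from rfl, h.fderiv]
  simp only [ContinuousLinearMap.comp_smul, smul_apply, ContinuousLinearMap.comp_apply,
    coe_innerSL_apply, fderiv_eq_smul_deriv, real_smul, nsmul_eq_mul, Nat.cast_ofNat]
  ring

end RadialKernel

section DifferentiationUnderIntegral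

variable {X E : Type*} [TopologicalSpace X] [MeasurableSpace X] [OpensMeasurableSpace X]
  {μ : Measure X} [IsFiniteMeasureOnCompacts μ]
  [NormedAddCommGroup E] [NormedSpace ℝ E] [ProperSpace E]

lemma hasFDerivAt_integral_mul_comp_sub {f : X → ℂ} (hf : Continuous f)
    (hfs : HasCompactSupport f) {e : X → E} (he : Continuous e) {S : E → ℂ}
    (hS : ContDiff ℝ 1 S) (r : E) :
    HasFDerivAt (fun r => ∫ q, f q * S (r - e q) ∂μ)
      (∫ q, f q • fderiv ℝ S (r - e q) ∂μ) r := by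
  obtain ⟨M, hM⟩ := ((isCompact_closedBall r 1).prod hfs).exists_bound_of_continuousOn
    (f := fun x : E × X => f x.2 • fderiv ℝ S (x.1 - e x.2))
    (Continuous.continuousOn (by fun_prop))
  have hint (x : E) : Integrable (fun q => f q * S (x - e q)) μ :=
    Continuous.integrable_of_hasCompactSupport (by fun_prop) hfs.mul_right
  have hint' : Integrable (fun q => f q • fderiv ℝ S (r - e q)) μ :=
    Continuous.integrable_of_hasCompactSupport (by fun_prop)
      (hfs.smul_right (f' := fun q => fderiv ℝ S (r - e q)))
  refine hasFDerivAt_integral_of_dominated_of_fderiv_le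
    (F' := fun x q => f q • fderiv ℝ S (x - e q))
    (bound := (tsupport f).indicator fun _ => M) (Metric.closedBall_mem_nhds r one_pos)
    (.of_forall fun x => (hint x).aestronglyMeasurable) (hint r) hint'.aestronglyMeasurable
    (.of_forall fun q x hx => ?_) ?_ (.of_forall fun q x _ => ?_)
  · by_cases hq : q ∈ tsupport f
    · simpa only [indicator_of_mem hq] using hM (x, q) ⟨hx, hq⟩
    · simp [hq, image_eq_zero_of_notMem_tsupport hq]
  · rw [integrable_indicator_iff (isClosed_tsupport f).measurableSet]
    exact integrableOn_const hfs.measure_lt_top.ne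
  · have hd : HasFDerivAt S (fderiv ℝ S (x - e q)) (x - e q) :=
      (hS.differentiable one_ne_zero _).hasFDerivAt
    exact (hd.comp x ((hasFDerivAt_id x).sub_const (e q))).const_mul (f q)

lemma fderiv_integral_mul_comp_sub_apply {f : X → ℂ} (hf : Continuous f)
    (hfs : HasCompactSupport f) {e : X → E} (he : Continuous e) {S : E → ℂ}
    (hS : ContDiff ℝ 1 S) (r w : E) :
    fderiv ℝ (fun r => ∫ q, f q * S (r - e q) ∂μ) r w =
      ∫ q, f q * fderiv ℝ S (r - e q) w ∂μ := by
  have hint : Integrable (fun q => f q • fderiv ℝ S (r - e q)) μ :=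
    Continuous.integrable_of_hasCompactSupport (by fun_prop)
      (hfs.smul_right (f' := fun q => fderiv ℝ S (r - e q)))
  rw [(hasFDerivAt_integral_mul_comp_sub hf hfs he hS r).fderiv,
    ContinuousLinearMap.integral_apply hint]
  rfl

end DifferentiationUnderIntegral

section PolarCoordinates

/-- The unit vector of the plane at angle `θ`, defined as the image of `exp (i θ)` under the
isometry `ℂ ≃ ℝ²` so that the polar coordinates of `ℂ` carry over. -/
def unitVec (θ : ℝ) : E2 := orthonormalBasisOneI.repr (cexp (θ * I))

lemma norm_unitVec (θ : ℝ) : ‖unitVec θ‖ = 1 := by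
  rw [unitVec, LinearIsometryEquiv.norm_map, norm_exp_ofReal_mul_I]

lemma contDiff_unitVec {n : WithTop ℕ∞} : ContDiff ℝ n unitVec :=
  orthonormalBasisOneI.repr.contDiff.comp <|
    (ofRealCLM.contDiff.mul contDiff_const).cexp

lemma repr_polarCoord_symm (p : ℝ × ℝ) :
    orthonormalBasisOneI.repr (Complex.polarCoord.symm p) = p.1 • unitVec p.2 := by
  rw [unitVec, ← map_smul, Complex.polarCoord_symm_apply, exp_mul_I, real_smul]
  push_cast
  rfl

variable {G : Type*} [NormedAddCommGroup G] [NormedSpace ℝ G]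

lemma integral_eq_setIntegral_polar (f : E2 → G) :
    ∫ x, f x = ∫ p in Ioi (0 : ℝ) ×ˢ Ioo (-π) π, p.1 • f (p.1 • unitVec p.2) := by
  rw [← orthonormalBasisOneI.repr.measurePreserving.integral_comp'
    (f := orthonormalBasisOneI.repr.toMeasurableEquiv), ← Complex.integral_comp_polarCoord_symm]
  exact setIntegral_congr_fun Complex.polarCoord.open_target.measurableSet fun p _ => by
    rw [← repr_polarCoord_symm]; rfl

lemma integrable_polar {f : E2 → G} (hf : Integrable f) :
    Integrable (fun p : ℝ × ℝ => p.1 • f (p.1 • unitVec p.2))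
      ((volume.restrict (Ioi 0)).prod (volume.restrict (Ioo (-π) π))) := by
  have hcomplex : Integrable (f ∘ orthonormalBasisOneI.repr) :=
    (orthonormalBasisOneI.repr.measurePreserving.integrable_comp_emb
      orthonormalBasisOneI.repr.toMeasurableEquiv.measurableEmbedding).2 hf
  have hprod : Integrable ((f ∘ orthonormalBasisOneI.repr) ∘ measurableEquivRealProd.symm) :=
    (volume_preserving_equiv_real_prod.symm.integrable_comp_emb
      measurableEquivRealProd.symm.measurableEmbedding).2 hcomplex
  have hpolar := (integrableOn_image_iff_integrableOn_abs_det_fderiv_smul volume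
    polarCoord.open_target.measurableSet
    (fun p _ => (hasFDerivAt_polarCoord_symm p).hasFDerivWithinAt) polarCoord.symm.injOn _).1
    hprod.integrableOn
  rw [Measure.prod_restrict]
  refine hpolar.congr_fun (fun p hp => ?_) polarCoord.open_target.measurableSet
  have hp0 : 0 < p.1 := hp.1
  simp only [det_fderivPolarCoordSymm, abs_of_pos hp0, Function.comp_apply,
    ← repr_polarCoord_symm]
  rfl

lemma integrableOn_setIntegral_polar {f : E2 → G} (hf : Integrable f) :
    IntegrableOn (fun θ => ∫ ρ in Ioi (0 : ℝ), ρ • f (ρ • unitVec θ)) (Ioo (-π) π) :=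
  (integrable_polar hf).integral_prod_right

lemma integral_eq_setIntegral_setIntegral_polar {f : E2 → G} (hf : Integrable f) :
    ∫ x, f x = ∫ θ in Ioo (-π) π, ∫ ρ in Ioi (0 : ℝ), ρ • f (ρ • unitVec θ) := by
  rw [integral_eq_setIntegral_polar, Measure.volume_eq_prod, ← Measure.prod_restrict,
    integral_prod_symm _ (integrable_polar hf)]

lemma setIntegral_mul_deriv_comp_sq {f g : ℝ → ℂ} (hf : ContDiff ℝ 1 f)
    (hfs : HasCompactSupport f) (hg : ContDiff ℝ 1 g) :
    ∫ ρ in Ioi (0 : ℝ), ρ • (f ρ * (2 * deriv g (ρ ^ 2))) =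
      -(f 0 * g 0) - ∫ ρ in Ioi (0 : ℝ), deriv f ρ * g (ρ ^ 2) := by
  have hderiv (ρ : ℝ) : HasDerivAt (fun ρ : ℝ => f ρ * g (ρ ^ 2))
      (deriv f ρ * g (ρ ^ 2) + ρ • (f ρ * (2 * deriv g (ρ ^ 2)))) ρ := by
    have hgρ := (hg.differentiable one_ne_zero (ρ ^ 2)).hasDerivAt.scomp ρ (hasDerivAt_pow 2 ρ)
    convert! (hf.differentiable one_ne_zero ρ).hasDerivAt.mul hgρ using 1
    simp only [real_smul, Function.comp_apply]
    push_cast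
    ring
  have hint : Integrable fun ρ : ℝ => deriv f ρ * g (ρ ^ 2) :=
    Continuous.integrable_of_hasCompactSupport (by fun_prop)
      (hfs.deriv.mul_right (f' := fun ρ => g (ρ ^ 2)))
  have hint' : Integrable fun ρ : ℝ => ρ • (f ρ * (2 * deriv g (ρ ^ 2))) :=
    Continuous.integrable_of_hasCompactSupport (by fun_prop)
      ((hfs.mul_right (f' := fun ρ => 2 * deriv g (ρ ^ 2))).smul_left (f := id))
  have hFTC := (hfs.mul_right (f' := fun ρ => g (ρ ^ 2))).integral_Ioi_deriv_eq
    (hf.mul (by fun_prop)) 0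
  simp only [(hderiv _).deriv] at hFTC
  rw [integral_add hint.integrableOn hint'.integrableOn, zero_pow two_ne_zero] at hFTC
  linear_combination hFTC

lemma setIntegral_comp_smul_mul_deriv_comp_sq {E : Type*} [NormedAddCommGroup E] [NormedSpace ℝ E]
    {f : E → ℂ} (hf : ContDiff ℝ 1 f) (hfs : HasCompactSupport f) {v : E} (hv : v ≠ 0) {g : ℝ → ℂ}
    (hg : ContDiff ℝ 1 g) :
    ∫ ρ in Ioi (0 : ℝ), ρ • (f (ρ • v) * (2 * deriv g (ρ ^ 2))) =
      -(f 0 * g 0) - ∫ ρ in Ioi (0 : ℝ), fderiv ℝ f (ρ • v) v * g (ρ ^ 2) := by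
  have hderiv (ρ : ℝ) : deriv (fun ρ : ℝ => f (ρ • v)) ρ = fderiv ℝ f (ρ • v) v := by
    have hline : HasDerivAt (fun ρ : ℝ => ρ • v) v ρ := by
      simpa only [one_smul, id_eq] using (hasDerivAt_id ρ).smul_const v
    exact ((hf.differentiable one_ne_zero _).hasFDerivAt.comp_hasDerivAt ρ hline).deriv
  rw [setIntegral_mul_deriv_comp_sq (f := fun ρ => f (ρ • v)) (by fun_prop)
    (hfs.comp_isClosedEmbedding (isClosedEmbedding_smul_left hv)) hg]
  simp only [hderiv, zero_smul]

lemma integral_mul_deriv_comp_norm_sq {f : E2 → ℂ} (hf : ContDiff ℝ 1 f)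
    (hfs : HasCompactSupport f) {g : ℝ → ℂ} (hg : ContDiff ℝ 1 g) :
    ∫ x, f x * (2 * deriv g (‖x‖ ^ 2)) = -(2 * π * (f 0 * g 0)) -
      ∫ θ in Ioo (-π) π, ∫ ρ in Ioi (0 : ℝ),
        fderiv ℝ f (ρ • unitVec θ) (unitVec θ) * g (ρ ^ 2) := by
  have hint : Integrable fun x => f x * (2 * deriv g (‖x‖ ^ 2)) :=
    Continuous.integrable_of_hasCompactSupport (by fun_prop) hfs.mul_right
  have hray (θ : ℝ) : ∫ ρ in Ioi (0 : ℝ), fderiv ℝ f (ρ • unitVec θ) (unitVec θ) * g (ρ ^ 2) =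
      -(f 0 * g 0) - ∫ ρ in Ioi (0 : ℝ), ρ • (f (ρ • unitVec θ) *
        (2 * deriv g (‖ρ • unitVec θ‖ ^ 2))) := by
    have hv : unitVec θ ≠ 0 := norm_ne_zero_iff.1 (by simp [norm_unitVec])
    simp only [norm_smul, norm_unitVec, mul_one, norm_eq_abs, sq_abs,
      setIntegral_comp_smul_mul_deriv_comp_sq hf hfs hv hg]
    ring
  simp only [hray]
  rw [integral_sub (integrable_const _) (integrableOn_setIntegral_polar hint),
    ← integral_eq_setIntegral_setIntegral_polar hint, setIntegral_const,
    Real.volume_real_Ioo_of_le (by linarith [Real.pi_pos]), real_smul]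
  push_cast
  ring

end PolarCoordinates

section SourcePlane

lemma continuous_emb2 : Continuous emb2 := by
  refine (PiLp.continuous_toLp 2 _).comp (continuous_pi fun i => ?_)
  fin_cases i
  · exact (EuclideanSpace.proj (𝕜 := ℝ) (0 : Fin 2)).continuous
  · exact (EuclideanSpace.proj (𝕜 := ℝ) (1 : Fin 2)).continuous
  · exact continuous_const

lemma contDiff_proj32 {n : WithTop ℕ∞} : ContDiff ℝ n proj32 := by
  rw [contDiff_euclidean]
  intro i
  fin_cases i
  · exact (EuclideanSpace.proj (𝕜 := ℝ) (0 : Fin 3)).contDiff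
  · exact (EuclideanSpace.proj (𝕜 := ℝ) (1 : Fin 3)).contDiff

lemma norm_proj32_le (r : E3) : ‖proj32 r‖ ≤ ‖r‖ := by
  rw [← sq_le_sq₀ (norm_nonneg _) (norm_nonneg _), EuclideanSpace.norm_sq_eq,
    EuclideanSpace.norm_sq_eq, Fin.sum_univ_three, Fin.sum_univ_two]
  exact le_add_of_nonneg_right (sq_nonneg _)

lemma norm_sub_emb2_add_proj32_sq (r : E3) (x : E2) :
    ‖r - emb2 (x + proj32 r)‖ ^ 2 = ‖x‖ ^ 2 + r 2 ^ 2 := by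
  rw [EuclideanSpace.norm_sq_eq, EuclideanSpace.norm_sq_eq, Fin.sum_univ_three, Fin.sum_univ_two]
  simp [emb2, proj32]

lemma inner_sub_emb2_single (r : E3) (q : E2) :
    ⟪r - emb2 q, EuclideanSpace.single 2 (1 : ℝ)⟫ = r 2 := by
  simp [emb2, EuclideanSpace.inner_single_right]

variable {η : E2 → ℝ}

lemma pz_eq_integral (hη : Continuous η) (hsupp : HasCompactSupport η) (k : ℂ) (r : E3) :
    pz η k r =
      ∫ x, (η (x + proj32 r) : ℂ) * (2 * (r 2 * deriv (sinKernel k) (‖x‖ ^ 2 + r 2 ^ 2))) := by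
  have hS : Skern k = fun v => sinKernel k (‖v‖ ^ 2) := funext (Skern_eq_sinKernel k)
  have hSdiff : ContDiff ℝ 1 (Skern k) := by
    rw [hS]
    exact (contDiff_sinKernel k).comp (contDiff_norm_sq ℝ)
  have hg : Differentiable ℝ (sinKernel k) := (contDiff_sinKernel k).differentiable one_ne_zero
  calc pz η k r
      = ∫ q, (η q : ℂ) * fderiv ℝ (Skern k) (r - emb2 q) (EuclideanSpace.single 2 1) :=
        fderiv_integral_mul_comp_sub_apply (by fun_prop) (hsupp.comp_left ofReal_zero)
          continuous_emb2 hSdiff r _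
    _ = ∫ q, (η q : ℂ) * (r 2 * (2 * deriv (sinKernel k) (‖r - emb2 q‖ ^ 2))) := by
        simp only [hS, fderiv_comp_norm_sq_apply (hg _), inner_sub_emb2_single]
    _ = ∫ x, (η (x + proj32 r) : ℂ) *
          (2 * (r 2 * deriv (sinKernel k) (‖x‖ ^ 2 + r 2 ^ 2))) := by
        rw [← integral_add_right_eq_self _ (proj32 r)]
        simp only [norm_sub_emb2_add_proj32_sq, mul_left_comm]

lemma pz_add_eq_neg_integral_polar (hη : ContDiff ℝ 1 η) (hsupp : HasCompactSupport η) (k : ℂ)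
    (r : E3) :
    pz η k r + 2 * π * (η (proj32 r) * Complex.sin (k * r 2)) =
      -∫ θ in Ioo (-π) π, ∫ ρ in Ioi (0 : ℝ),
        fderiv ℝ η (ρ • unitVec θ + proj32 r) (unitVec θ) *
          (r 2 * sinKernel k (ρ ^ 2 + r 2 ^ 2)) := by
  have hsmooth : ContDiff ℝ 1 fun x => (η (x + proj32 r) : ℂ) :=
    ofRealCLM.contDiff.comp (by fun_prop)
  have hcompact : HasCompactSupport fun x => (η (x + proj32 r) : ℂ) :=
    (hsupp.comp_homeomorph (Homeomorph.addRight (proj32 r))).comp_left ofReal_zero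
  have hkernel : ContDiff ℝ 1 fun t => (r 2 : ℂ) * sinKernel k (t + r 2 ^ 2) :=
    contDiff_const.mul ((contDiff_sinKernel k).comp (by fun_prop))
  have hfderiv (x v : E2) : fderiv ℝ (fun x => (η (x + proj32 r) : ℂ)) x v =
      fderiv ℝ η (x + proj32 r) v := by
    have hd := (hη.differentiable one_ne_zero (x + proj32 r)).hasFDerivAt.comp x
      ((hasFDerivAt_id x).add_const (proj32 r))
    exact DFunLike.congr_fun (ofRealCLM.hasFDerivAt.comp x hd).fderiv v
  have hderiv (t : ℝ) : deriv (fun t => (r 2 : ℂ) * sinKernel k (t + r 2 ^ 2)) t =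
      r 2 * deriv (sinKernel k) (t + r 2 ^ 2) := by
    rw [deriv_const_mul_field, deriv_comp_add_const]
  have hpolar := integral_mul_deriv_comp_norm_sq hsmooth hcompact hkernel
  simp only [hfderiv, hderiv, ← pz_eq_integral hη.continuous hsupp, zero_add,
    mul_sinKernel_sq] at hpolar
  linear_combination hpolar

end SourcePlane

section PolarOscillatoryIntegral

/-- The distance from the observation point `r` to the source point `proj32 r + ρ • unitVec θ` of
the plane, as a function of `x = ((r, θ), ρ)`: the phase of the oscillatory integral. -/
def polarDist (x : (E3 × ℝ) × ℝ) : ℝ := √(x.2 ^ 2 + x.1.1 2 ^ 2)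

/-- The amplitude of the oscillatory integral at `x = ((r, θ), ρ)`. -/
def polarAmplitude (η : E2 → ℝ) (x : (E3 × ℝ) × ℝ) : ℂ :=
  (x.1.1 2 * fderiv ℝ η (x.2 • unitVec x.1.2 + proj32 x.1.1) (unitVec x.1.2) / polarDist x : ℝ)

lemma sq_polarDist (x : (E3 × ℝ) × ℝ) : polarDist x ^ 2 = x.2 ^ 2 + x.1.1 2 ^ 2 :=
  Real.sq_sqrt (by positivity)

lemma polarDist_pos {x : (E3 × ℝ) × ℝ} (hx : 0 < x.2) : 0 < polarDist x :=
  Real.sqrt_pos.2 (by positivity)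

lemma contDiffOn_polarDist {n : WithTop ℕ∞} : ContDiffOn ℝ n polarDist {x | 0 < x.2} := by
  have hz : ContDiff ℝ n fun x : (E3 × ℝ) × ℝ => x.1.1 2 :=
    (EuclideanSpace.proj (𝕜 := ℝ) (2 : Fin 3)).contDiff.comp (contDiff_fst.comp contDiff_fst)
  refine ContDiffOn.sqrt ((contDiff_snd.pow 2).add (hz.pow 2)).contDiffOn fun x hx => ?_
  have : 0 < x.2 := hx
  positivity

lemma partialSnd_polarDist {x : (E3 × ℝ) × ℝ} (hx : 0 < x.2) :
    partialSnd polarDist x = x.2 / polarDist x := by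
  have hsq : HasDerivAt (fun t => t ^ 2 + x.1.1 2 ^ 2) (2 * x.2) x.2 := by
    simpa using (hasDerivAt_pow 2 x.2).add_const (x.1.1 2 ^ 2)
  refine (hsq.sqrt (by positivity)).deriv.trans ?_
  rw [mul_div_mul_left _ _ two_ne_zero, polarDist]

lemma contDiffOn_polarAmplitude {η : E2 → ℝ} (hη : ContDiff ℝ ∞ η) :
    ContDiffOn ℝ ∞ (polarAmplitude η) {x | 0 < x.2} := by
  have hz : ContDiff ℝ ∞ fun x : (E3 × ℝ) × ℝ => x.1.1 2 :=
    (EuclideanSpace.proj (𝕜 := ℝ) (2 : Fin 3)).contDiff.comp (contDiff_fst.comp contDiff_fst)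
  have hv : ContDiff ℝ ∞ fun x : (E3 × ℝ) × ℝ => unitVec x.1.2 :=
    contDiff_unitVec.comp (contDiff_snd.comp contDiff_fst)
  have hp : ContDiff ℝ ∞ fun x : (E3 × ℝ) × ℝ => proj32 x.1.1 :=
    contDiff_proj32.comp (contDiff_fst.comp contDiff_fst)
  have hη' : ContDiff ℝ ∞ (fderiv ℝ η) := hη.fderiv_right le_rfl
  have hslope := (hη'.comp ((contDiff_snd.smul hv).add hp)).clm_apply hv
  exact ofRealCLM.contDiff.comp_contDiffOn <|
    (hz.mul hslope).contDiffOn.div contDiffOn_polarDist fun x hx => (polarDist_pos hx).ne'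

lemma polarAmplitude_mul_sin (η : E2 → ℝ) (k : ℂ) {x : (E3 × ℝ) × ℝ} (hx : 0 < x.2) :
    polarAmplitude η x * Complex.sin (k * polarDist x) =
      fderiv ℝ η (x.2 • unitVec x.1.2 + proj32 x.1.1) (unitVec x.1.2) *
        (x.1.1 2 * sinKernel k (x.2 ^ 2 + x.1.1 2 ^ 2)) := by
  have hne : (polarDist x : ℂ) ≠ 0 := ofReal_ne_zero.2 (polarDist_pos hx).ne'
  rw [← mul_sinKernel_sq, ← sq_polarDist, polarAmplitude]
  push_cast
  field_simp

lemma setIntegral_Ioi_eq_integral_polarAmplitude_mul_sin {η : E2 → ℝ} {r : E3} {θ a b : ℝ}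
    (ha : 0 < a) (hab : a ≤ b)
    (hzero : ∀ ρ, 0 < ρ → ρ ≤ a ∨ b < ρ → fderiv ℝ η (ρ • unitVec θ + proj32 r) = 0) (k : ℂ) :
    ∫ ρ in Ioi (0 : ℝ), fderiv ℝ η (ρ • unitVec θ + proj32 r) (unitVec θ) *
        (r 2 * sinKernel k (ρ ^ 2 + r 2 ^ 2)) =
      ∫ ρ in a..b, polarAmplitude η ((r, θ), ρ) * Complex.sin (k * polarDist ((r, θ), ρ)) := by
  rw [intervalIntegral.integral_of_le hab,
    ← setIntegral_eq_of_subset_of_forall_sdiff_eq_zero measurableSet_Ioi (s := Ioc a b)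
      fun ρ hρ => ha.trans hρ.1]
  · exact setIntegral_congr_fun measurableSet_Ioi fun ρ hρ =>
      (polarAmplitude_mul_sin η k (x := ((r, θ), ρ)) hρ).symm
  · rintro ρ ⟨hρ0, hρ⟩
    have hρ' : ρ ≤ a ∨ b < ρ := by
      by_contra! h
      exact hρ h
    simp [polarAmplitude, hzero ρ hρ0 hρ']

variable {E F : Type*} [NormedAddCommGroup E] [NormedSpace ℝ E] [NormedAddCommGroup F]
  [NormedSpace ℝ F]

lemma fderiv_eq_zero_of_forall_norm_sub_le {f : E → F} {c : F} {p x : E} {R : ℝ}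
    (hf : ∀ q, ‖q - p‖ ≤ R → f q = c) (hx : ‖x - p‖ < R) : fderiv ℝ f x = 0 := by
  have hconst : f =ᶠ[𝓝 x] fun _ => c := by
    filter_upwards [Metric.isOpen_ball.mem_nhds (mem_ball_iff_norm.2 hx)] with q hq
    exact hf q (mem_ball_iff_norm.1 hq).le
  rw [hconst.fderiv_eq, fderiv_const_apply]

lemma exists_forall_fderiv_smul_unitVec_add_proj32_eq_zero {η : E2 → ℝ}
    (hsupp : HasCompactSupport η) {K : Set E3} (hK : Bornology.IsBounded K) :
    ∃ B > 0, ∀ r ∈ K, ∀ θ ρ : ℝ, B < ρ → fderiv ℝ η (ρ • unitVec θ + proj32 r) = 0 := by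
  obtain ⟨B₁, hB₁0, hB₁⟩ := hsupp.isBounded.exists_pos_norm_le
  obtain ⟨B₂, hB₂0, hB₂⟩ := hK.exists_pos_norm_le
  refine ⟨B₁ + B₂, by positivity, fun r hr θ ρ hρ => fderiv_of_notMem_tsupport (𝕜 := ℝ) ?_⟩
  intro hmem
  have hle : ρ ≤ B₁ + B₂ := calc
    ρ ≤ ‖ρ • unitVec θ‖ := by simpa [norm_smul, norm_unitVec] using le_abs_self ρ
    _ ≤ ‖ρ • unitVec θ + proj32 r‖ + ‖proj32 r‖ := norm_le_add_norm_add _ _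
    _ ≤ B₁ + B₂ := add_le_add (hB₁ _ hmem) ((norm_proj32_le r).trans (hB₂ r hr))
  exact hρ.not_ge hle

end PolarOscillatoryIntegral

theorem stmt5_general {η : E2 → ℝ} (hη : ContDiff ℝ ∞ η) (hsupp : HasCompactSupport η)
    {K : Set E3} (hK : Bornology.IsBounded K) {δ : ℝ} (hδ : 0 < δ)
    (hone : ∀ r ∈ K, ∀ q, ‖q - proj32 r‖ ≤ 2 * δ → η q = 1) (c₀ : ℝ) (n : ℕ) :
    ∃ C : ℝ, ∀ r ∈ K, ∀ k : ℂ, |k.im| ≤ c₀ →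
      ‖k‖ ^ n * ‖pz η k r + 2 * π * Complex.sin (k * r 2)‖ ≤ C := by
  obtain ⟨B, hB, hfar⟩ := exists_forall_fderiv_smul_unitVec_add_proj32_eq_zero hsupp hK
  have hnear : ∀ r ∈ K, ∀ θ ρ : ℝ, 0 < ρ → ρ < 2 * δ →
      fderiv ℝ η (ρ • unitVec θ + proj32 r) = 0 := fun r hr θ ρ hρ0 hρ =>
    fderiv_eq_zero_of_forall_norm_sub_le (hone r hr) <| by
      rwa [add_sub_cancel_right, norm_smul, norm_unitVec, mul_one, Real.norm_of_nonneg hρ0.le]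
  have hδB : δ ≤ B + δ := by linarith
  obtain ⟨C, hC⟩ := exists_norm_pow_mul_norm_integral_mul_sin_le
    (isOpen_lt continuous_const continuous_snd) contDiffOn_polarDist
    (fun _ hx => (partialSnd_polarDist hx).trans_ne (div_pos hx (polarDist_pos hx)).ne')
    (hK.isCompact_closure.prod (isCompact_Icc (a := -π) (b := π)))
    (fun x hx => hδ.trans_le (uIcc_of_le hδB ▸ hx.2 : x.2 ∈ Icc δ (B + δ)).1) c₀ n
    (contDiffOn_polarAmplitude hη)
  have hray : ∀ r ∈ K, ∀ θ ∈ Ioo (-π) π, ∀ k : ℂ, |k.im| ≤ c₀ →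
      ‖k ^ n * ∫ ρ in Ioi (0 : ℝ), fderiv ℝ η (ρ • unitVec θ + proj32 r) (unitVec θ) *
        (r 2 * sinKernel k (ρ ^ 2 + r 2 ^ 2))‖ ≤ C := by
    intro r hr θ hθ k hk
    rw [setIntegral_Ioi_eq_integral_polarAmplitude_mul_sin hδ hδB _ k, norm_mul, norm_pow]
    · refine hC (r, θ) ⟨subset_closure hr, Ioo_subset_Icc_self hθ⟩ ?_ ?_ k hk
      · filter_upwards [Ioo_mem_nhds hδ (by linarith : δ < 2 * δ)] with ρ hρ
        simp [polarAmplitude, hnear r hr θ ρ hρ.1 hρ.2]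
      · filter_upwards [Ioi_mem_nhds (by linarith : B < B + δ)] with ρ hρ
        simp [polarAmplitude, hfar r hr θ ρ hρ]
    · rintro ρ hρ0 (hρ | hρ)
      · exact hnear r hr θ ρ hρ0 (by linarith)
      · exact hfar r hr θ ρ (by linarith)
  refine ⟨C * volume.real (Ioo (-π) π), fun r hr k hk => ?_⟩
  have hcenter : η (proj32 r) = 1 := hone r hr _ (by simp [hδ.le])
  have hpolar := pz_add_eq_neg_integral_polar (hη.of_le (by simp)) hsupp k r
  rw [hcenter, ofReal_one, one_mul] at hpolar
  rw [hpolar, norm_neg, ← norm_pow, ← norm_mul, ← integral_const_mul]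
  exact norm_setIntegral_le_of_norm_le_const measure_Ioo_lt_top fun θ hθ => hray r hr θ hθ k hk

theorem stmt5 (η : E2 → ℝ) (hη : ContDiff ℝ (⊤ : ℕ∞) η) (hsupp : HasCompactSupport η)
    (K : Set E3) (hK : IsCompact K) (δ : ℝ) (hδ : 0 < δ)
    (hone : ∀ r ∈ K, ∀ q : E2, ‖q - proj32 r‖ ≤ 2 * δ → η q = 1) :
    ∀ c₀ > (0:ℝ), ∀ n : ℕ, ∃ C : ℝ, ∀ r ∈ K, ∀ k : ℂ,
      1 ≤ k.re → |k.im| ≤ c₀ →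
      ‖pz η k r + 2 * π * Complex.sin (k * (r 2 : ℂ))‖ ≤ C / k.re ^ n := by
  intro c₀ _ n
  obtain ⟨C, hC⟩ := stmt5_general hη hsupp hK.isBounded hδ hone c₀ n
  exact ⟨C, fun r hr k hre him => (le_div_iff₀' (by positivity)).2 <|
    le_trans (by gcongr; exact re_le_norm k) (hC r hr k him)⟩

end
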